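/- arXiv:2307.05401 — 2 statements merged into one kernel-verified Lean document; each statement's English description precedes it below -/
import Mathlib

section
/- There exists a constant γ > 0, depending only on n and m, such that for every x ∈ ℝⁿ the function y ↦ |x−y|^{2m−n} (2/(1+|y|²))^{(n+2m)/2} is Lebesgue integrable on ℝⁿ and ((1+|x|²)/2)^{(2m−n)/2} = γ ∫_{ℝⁿ} |x−y|^{2m−n} (2/(1+|y|²))^{(n+2m)/2} dy. -/
open MeasureTheory

/-!
Under stereographic projection, the inversion `σ` in the sphere centred at `x` of radius
`R = √(1 + |x|²)` becomes the reflection of the unit sphere that exchanges the image of `x` with the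
point at infinity. It therefore turns the conformal factor `2 / (1 + |y|²)` into its multiple by
`(|z - x| / R)²`, while its Jacobian is `(R / |z - x|)^(2d)` and `|σ z - x| = R² / |z - x|`.
In the integral after the substitution `y = σ z` all powers of `|z - x|` cancel, so that the
dependence on `x` is carried by a power of `R` alone.
-/

open EuclideanGeometry Module

section Inversion

lemma image_inversion_compl_center {V P : Type*} [NormedAddCommGroup V] [InnerProductSpace ℝ V]
    [MetricSpace P] [NormedAddTorsor V P] (c : P) {R : ℝ} (hR : R ≠ 0) :
    inversion c R '' {c}ᶜ = {c}ᶜ := by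
  rw [Set.image_compl_eq (inversion_bijective c hR), Set.image_singleton, inversion_self]

variable {E : Type*} [NormedAddCommGroup E] [InnerProductSpace ℝ E] [FiniteDimensional ℝ E]

lemma abs_det_smul_linearIsometryEquiv (a : ℝ) (e : E ≃ₗᵢ[ℝ] E) :
    |(a • (e : E →L[ℝ] E)).det| = |a| ^ finrank ℝ E := by
  have abs_det_eq_one : |(e.toLinearIsometry.toLinearMap).det| = 1 := by
    rw [← LinearMap.normDet_eq_abs_det, LinearIsometry.normDet_eq_one]
  rw [ContinuousLinearMap.det, ContinuousLinearMap.toLinearMap_smul, LinearMap.det_smul, abs_mul,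
    abs_pow]
  exact mul_right_eq_self₀.2 (.inl abs_det_eq_one)

variable [Nontrivial E] [MeasurableSpace E] [BorelSpace E] {μ : Measure E} [μ.IsAddHaarMeasure]
  {F : Type*} [NormedAddCommGroup F] [NormedSpace ℝ F] {c : E} {R : ℝ}

theorem integrable_comp_inversion_iff (hR : R ≠ 0) (f : E → F) :
    Integrable (fun z => ((R / dist z c) ^ 2) ^ finrank ℝ E • f (inversion c R z)) μ ↔
      Integrable f μ := by
  have h := integrableOn_image_iff_integrableOn_abs_det_fderiv_smul μ
    (measurableSet_singleton c).compl
    (fun z hz => (hasFDerivAt_inversion hz).hasFDerivWithinAt) (inversion_injective c hR).injOn f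
  simpa only [image_inversion_compl_center c hR, IntegrableOn, restrict_compl_singleton,
    abs_det_smul_linearIsometryEquiv, abs_sq] using h.symm

theorem integral_comp_inversion (hR : R ≠ 0) (f : E → F) :
    ∫ z, ((R / dist z c) ^ 2) ^ finrank ℝ E • f (inversion c R z) ∂μ = ∫ y, f y ∂μ := by
  have h := integral_image_eq_integral_abs_det_fderiv_smul μ
    (measurableSet_singleton c).compl
    (fun z hz => (hasFDerivAt_inversion hz).hasFDerivWithinAt) (inversion_injective c hR).injOn f
  simpa only [image_inversion_compl_center c hR, restrict_compl_singleton,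
    abs_det_smul_linearIsometryEquiv, abs_sq] using h.symm

end Inversion

section StereographicFactor

variable {E : Type*} [NormedAddCommGroup E]

/-- The conformal factor `2 / (1 + |y|²)` of the inverse stereographic projection from `E` to the
unit sphere of `E × ℝ`. -/
noncomputable def stereographicFactor (y : E) : ℝ := 2 / (1 + ‖y‖ ^ 2)

lemma stereographicFactor_pos (y : E) : 0 < stereographicFactor y := by
  unfold stereographicFactor
  positivity

lemma continuous_stereographicFactor : Continuous (stereographicFactor : E → ℝ) :=
  continuous_const.div (by fun_prop) fun _ => by positivity

lemma stereographicFactor_inversion [InnerProductSpace ℝ E] {x z : E} (hz : z ≠ x) {R : ℝ}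
    (hR : R ^ 2 = 1 + ‖x‖ ^ 2) :
    stereographicFactor (inversion x R z) =
      ((R / dist z x) ^ 2)⁻¹ * stereographicFactor z := by
  obtain ⟨v, rfl⟩ : ∃ v, z = v + x := ⟨z - x, (sub_add_cancel z x).symm⟩
  have hv : 0 < ‖v‖ := norm_pos_iff.2 fun h => hz (by rw [h, zero_add])
  have one_add_norm_sq : 1 + ‖inversion x R (v + x)‖ ^ 2 =
      (R / dist (v + x) x) ^ 2 * (1 + ‖v + x‖ ^ 2) := by
    simp only [inversion, vsub_eq_sub, vadd_eq_add, dist_eq_norm, add_sub_cancel_right, div_pow,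
      hR, norm_add_sq_real, norm_smul, mul_pow, real_inner_smul_left, Real.norm_eq_abs, sq_abs]
    field_simp
    ring
  rw [stereographicFactor, stereographicFactor, one_add_norm_sq, ← div_div, div_right_comm,
    div_eq_inv_mul]

variable [NormedSpace ℝ E] [FiniteDimensional ℝ E] [MeasurableSpace E] [BorelSpace E]
  {μ : Measure E} [μ.IsAddHaarMeasure] {p : ℝ}

lemma integrable_stereographicFactor_rpow (hp : (finrank ℝ E : ℝ) < 2 * p) :
    Integrable (fun y : E => stereographicFactor y ^ p) μ := by
  have h := (integrable_rpow_neg_one_add_norm_sq (μ := μ) hp).const_mul (2 ^ p)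
  refine h.congr (.of_forall fun y => ?_)
  have hy : 0 ≤ 1 + ‖y‖ ^ 2 := by positivity
  simp only [stereographicFactor]
  rw [Real.div_rpow zero_le_two hy, neg_div, mul_div_cancel_left₀ p two_ne_zero,
    Real.rpow_neg hy, div_eq_mul_inv]

lemma integral_stereographicFactor_rpow_pos (hp : (finrank ℝ E : ℝ) < 2 * p) :
    0 < ∫ y : E, stereographicFactor y ^ p ∂μ :=
  integral_pos_of_integrable_nonneg_nonzero (x := 0)
    (continuous_stereographicFactor.rpow_const fun y => .inl (stereographicFactor_pos y).ne')
    (integrable_stereographicFactor_rpow hp)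
    (fun y => (Real.rpow_pos_of_pos (stereographicFactor_pos y) p).le)
    (Real.rpow_pos_of_pos (stereographicFactor_pos 0) p).ne'

end StereographicFactor

section RieszKernel

variable {E : Type*} [NormedAddCommGroup E] [InnerProductSpace ℝ E]

/-- The Riesz kernel `|x - y|^(2s - d)` of order `2s` on a `d`-dimensional space, weighted by the
power of the stereographic conformal factor that makes it conformally covariant in `y`. At `y = x`
and `2s < d`, where the kernel is singular, its value is `0`. -/
noncomputable def weightedRieszKernel (s : ℝ) (x y : E) : ℝ :=
  ‖x - y‖ ^ (2 * s - finrank ℝ E) * stereographicFactor y ^ ((finrank ℝ E + 2 * s) / 2)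

lemma sq_pow_mul_rpow_mul_inv_sq_rpow {a : ℝ} (ha : 0 < a) (d : ℕ) (s : ℝ) :
    (a ^ 2) ^ d * (a ^ (2 * s - d) * ((a ^ 2)⁻¹) ^ ((d + 2 * s) / 2)) = 1 := by
  have hinv : ((a ^ 2)⁻¹) ^ ((d + 2 * s) / 2) = a ^ (-(d + 2 * s)) := by
    rw [← Real.rpow_neg_eq_inv_rpow, ← Real.rpow_natCast_mul ha.le]
    congr 1
    push_cast
    ring
  rw [hinv, ← pow_mul, ← Real.rpow_natCast, ← Real.rpow_add ha, ← Real.rpow_add ha]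
  convert Real.rpow_zero a using 2
  push_cast
  ring

lemma weightedRieszKernel_inversion {s R : ℝ} {x z : E} (hz : z ≠ x) (hR : 0 < R)
    (hRx : R ^ 2 = 1 + ‖x‖ ^ 2) :
    ((R / dist z x) ^ 2) ^ finrank ℝ E * weightedRieszKernel s x (inversion x R z) =
      R ^ (2 * s - finrank ℝ E) * stereographicFactor z ^ ((finrank ℝ E + 2 * s) / 2) := by
  have ha : 0 < R / dist z x := div_pos hR (dist_pos.2 hz)
  have hdist : ‖x - inversion x R z‖ = R * (R / dist z x) := by
    rw [← dist_eq_norm, dist_center_inversion, dist_comm x z, sq, mul_div_assoc]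
  rw [weightedRieszKernel, hdist, stereographicFactor_inversion hz hRx,
    Real.mul_rpow hR.le ha.le, Real.mul_rpow (by positivity) (stereographicFactor_pos z).le]
  linear_combination
    R ^ (2 * s - finrank ℝ E) * stereographicFactor z ^ ((finrank ℝ E + 2 * s) / 2) *
      sq_pow_mul_rpow_mul_inv_sq_rpow ha (finrank ℝ E) s

variable [FiniteDimensional ℝ E] [Nontrivial E] [MeasurableSpace E] [BorelSpace E]
  {μ : Measure E} [μ.IsAddHaarMeasure]

lemma weightedRieszKernel_inversion_ae_eq {s R : ℝ} {x : E} (hR : 0 < R)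
    (hRx : R ^ 2 = 1 + ‖x‖ ^ 2) :
    (fun z => ((R / dist z x) ^ 2) ^ finrank ℝ E • weightedRieszKernel s x (inversion x R z))
      =ᵐ[μ] fun z => R ^ (2 * s - finrank ℝ E) *
        stereographicFactor z ^ ((finrank ℝ E + 2 * s) / 2) := by
  filter_upwards [Measure.ae_ne μ x] with z hz using weightedRieszKernel_inversion hz hR hRx

lemma integrable_weightedRieszKernel {s : ℝ} (hs : 0 < s) (x : E) :
    Integrable (weightedRieszKernel s x) μ := by
  have hx : 0 < 1 + ‖x‖ ^ 2 := by positivity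
  have hR : 0 < √(1 + ‖x‖ ^ 2) := Real.sqrt_pos.2 hx
  rw [← integrable_comp_inversion_iff (c := x) hR.ne',
    integrable_congr (weightedRieszKernel_inversion_ae_eq hR (Real.sq_sqrt hx.le))]
  exact (integrable_stereographicFactor_rpow (by linarith)).const_mul _

lemma integral_weightedRieszKernel (s : ℝ) (x : E) :
    ∫ y, weightedRieszKernel s x y ∂μ = (1 + ‖x‖ ^ 2) ^ ((2 * s - finrank ℝ E) / 2) *
      ∫ z, stereographicFactor z ^ ((finrank ℝ E + 2 * s) / 2) ∂μ := by
  have hx : 0 < 1 + ‖x‖ ^ 2 := by positivity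
  have hR : 0 < √(1 + ‖x‖ ^ 2) := Real.sqrt_pos.2 hx
  rw [← integral_comp_inversion (c := x) hR.ne',
    integral_congr_ae (weightedRieszKernel_inversion_ae_eq hR (Real.sq_sqrt hx.le)),
    integral_const_mul, Real.rpow_div_two_eq_sqrt _ hx.le]

end RieszKernel

theorem stmt4_general {E : Type*} [NormedAddCommGroup E] [InnerProductSpace ℝ E]
    [FiniteDimensional ℝ E] [Nontrivial E] [MeasurableSpace E] [BorelSpace E]
    (μ : Measure E) [μ.IsAddHaarMeasure] {s : ℝ} (hs : 0 < s) :
    ∃ γ : ℝ, 0 < γ ∧ ∀ x : E,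
      Integrable (fun y : E => ‖x - y‖ ^ (2 * s - finrank ℝ E) *
        (2 / (1 + ‖y‖ ^ 2)) ^ ((finrank ℝ E + 2 * s) / 2)) μ ∧
      ((1 + ‖x‖ ^ 2) / 2) ^ ((2 * s - finrank ℝ E) / 2) =
        γ * ∫ y : E, ‖x - y‖ ^ (2 * s - finrank ℝ E) *
          (2 / (1 + ‖y‖ ^ 2)) ^ ((finrank ℝ E + 2 * s) / 2) ∂μ := by
  set J := ∫ z : E, stereographicFactor z ^ ((finrank ℝ E + 2 * s) / 2) ∂μ with hJ_def
  have hJ : 0 < J := integral_stereographicFactor_rpow_pos (by linarith)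
  refine ⟨(2 ^ ((2 * s - finrank ℝ E) / 2) * J)⁻¹, by positivity,
    fun x => ⟨integrable_weightedRieszKernel hs x, ?_⟩⟩
  change _ = _ * ∫ y, weightedRieszKernel s x y ∂μ
  rw [integral_weightedRieszKernel, ← hJ_def, Real.div_rpow (by positivity) zero_le_two]
  field_simp

/-- There is a constant `γ > 0`, depending only on `n` and `m`, such that for every
`x ∈ ℝⁿ` the function `y ↦ |x−y|^{2m−n} (2/(1+|y|²))^{(n+2m)/2}` is Lebesgue
integrable and `((1+|x|²)/2)^{(2m−n)/2} = γ ∫ |x−y|^{2m−n} (2/(1+|y|²))^{(n+2m)/2} dy`. -/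
theorem stmt4 (n m : ℕ) (hn : 3 ≤ n) (hodd : Odd n) (hmn : n < 2 * m) :
    ∃ γ : ℝ, 0 < γ ∧ ∀ x : EuclideanSpace ℝ (Fin n),
      Integrable (fun y : EuclideanSpace ℝ (Fin n) =>
        ‖x - y‖ ^ (2 * m - n) * (2 / (1 + ‖y‖ ^ 2)) ^ (((n : ℝ) + 2 * m) / 2)) ∧
      ((1 + ‖x‖ ^ 2) / 2) ^ ((2 * (m : ℝ) - n) / 2) =
        γ * ∫ y : EuclideanSpace ℝ (Fin n),
          ‖x - y‖ ^ (2 * m - n) * (2 / (1 + ‖y‖ ^ 2)) ^ (((n : ℝ) + 2 * m) / 2) := by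
  have : NeZero n := ⟨by lia⟩
  simpa only [finrank_euclideanSpace_fin, ← Real.rpow_natCast _ (2 * m - n), Nat.cast_sub hmn.le,
    Nat.cast_mul, Nat.cast_ofNat] using
    stmt4_general (E := EuclideanSpace ℝ (Fin n)) volume (s := m) (by norm_cast; lia)
end

section
/- Let (F_k) be a sequence of nonnegative measurable functions on ℝⁿ with ∫_{ℝⁿ} F_k(y) dy = 1 for every k, and suppose that for every δ > 0 one has ∫_{{|y| ≥ δ}} (1+|y|^{2m−n}) F_k(y) dy → 0 as k → ∞. Define ũ_k(x) := ∫_{ℝⁿ} |x−y|^{2m−n} F_k(y) dy. Then (i) ũ_k converges to the function x ↦ |x|^{2m−n} uniformly on every compact subset of ℝⁿ, and (ii) there exist a constant C > 0 and an index k₀ such that C^{−1}|x|^{2m−n} ≤ ũ_k(x) ≤ C|x|^{2m−n} for all x with |x| ≥ 1 and all k ≥ k₀. -/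
open MeasureTheory Filter
open scoped Topology

/-!
The difference `|‖x - y‖ ^ p - ‖x‖ ^ p|` is `O(δ (1 + ‖x‖ ^ p))` when `‖y‖ ≤ δ ≤ 1`, by the mean
value inequality, and `O((1 + ‖x‖ ^ p) (1 + ‖y‖ ^ p))` for every `y`. Integrating against a
probability density `f`, with the first bound on `‖y‖ < δ` and the second on `δ ≤ ‖y‖`, shows that
the potential of `f` differs from `‖x‖ ^ p` by `O(1 + ‖x‖ ^ p)` times `δ` plus the weighted tail of
`f`. Hence the error relative to `1 + ‖x‖ ^ p` tends to zero uniformly in `x` on the whole space,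
which gives both uniform convergence on bounded sets and two-sided comparability for `1 ≤ ‖x‖`.
-/

section Kernel

variable {E : Type*} [SeminormedAddCommGroup E]

theorem norm_sub_pow_le_mul (x y : E) (p : ℕ) :
    ‖x - y‖ ^ p ≤ 2 ^ (p - 1) * (1 + ‖x‖ ^ p) * (1 + ‖y‖ ^ p) :=
  have hprod : 0 ≤ ‖x‖ ^ p * ‖y‖ ^ p := by positivity
  calc ‖x - y‖ ^ p ≤ (‖x‖ + ‖y‖) ^ p := by gcongr; exact norm_sub_le x y
    _ ≤ 2 ^ (p - 1) * (‖x‖ ^ p + ‖y‖ ^ p) := add_pow_le (norm_nonneg x) (norm_nonneg y) p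
    _ ≤ 2 ^ (p - 1) * ((1 + ‖x‖ ^ p) * (1 + ‖y‖ ^ p)) := by gcongr; linarith
    _ = 2 ^ (p - 1) * (1 + ‖x‖ ^ p) * (1 + ‖y‖ ^ p) := (mul_assoc _ _ _).symm

theorem abs_norm_sub_pow_sub_norm_pow_le (x y : E) (p : ℕ) :
    |‖x - y‖ ^ p - ‖x‖ ^ p| ≤ 2 ^ (p - 1) * (1 + ‖x‖ ^ p) * (1 + ‖y‖ ^ p) := by
  have hx : ‖x‖ ^ p ≤ 2 ^ (p - 1) * (1 + ‖x‖ ^ p) * (1 + ‖y‖ ^ p) :=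
    calc ‖x‖ ^ p = 1 * (0 + ‖x‖ ^ p) * (1 + 0) := by ring
      _ ≤ 2 ^ (p - 1) * (1 + ‖x‖ ^ p) * (1 + ‖y‖ ^ p) := by
        gcongr
        · exact one_le_pow₀ one_le_two
        · exact zero_le_one
        · positivity
  exact abs_sub_le_of_nonneg_of_le (by positivity) (norm_sub_pow_le_mul x y p) (by positivity) hx

theorem abs_norm_sub_pow_sub_norm_pow_le_of_norm_le_one (x : E) {y : E} (hy : ‖y‖ ≤ 1) (p : ℕ) :
    |‖x - y‖ ^ p - ‖x‖ ^ p| ≤ p * 2 ^ (p - 1) * (1 + ‖x‖ ^ p) * ‖y‖ := by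
  have hdiff : |‖x - y‖ - ‖x‖| ≤ ‖y‖ := by
    simpa only [sub_sub_cancel_left, norm_neg] using abs_norm_sub_norm_le (x - y) x
  have hmax : max |‖x - y‖| |‖x‖| ≤ 1 + ‖x‖ := by
    rw [abs_norm, abs_norm]
    exact max_le (by linarith [norm_sub_le x y]) (by linarith)
  have hpow : max |‖x - y‖| |‖x‖| ^ (p - 1) ≤ 2 ^ (p - 1) * (1 + ‖x‖ ^ p) :=
    calc max |‖x - y‖| |‖x‖| ^ (p - 1) ≤ (1 + ‖x‖) ^ (p - 1) := by gcongr
      _ ≤ (1 + ‖x‖) ^ p :=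
        pow_le_pow_right₀ (le_add_of_nonneg_right (norm_nonneg x)) (Nat.sub_le p 1)
      _ ≤ 2 ^ (p - 1) * (1 + ‖x‖ ^ p) := by
        simpa only [one_pow] using add_pow_le zero_le_one (norm_nonneg x) p
  calc |‖x - y‖ ^ p - ‖x‖ ^ p|
      ≤ |‖x - y‖ - ‖x‖| * p * max |‖x - y‖| |‖x‖| ^ (p - 1) := abs_pow_sub_pow_le _ _ p
    _ ≤ ‖y‖ * p * (2 ^ (p - 1) * (1 + ‖x‖ ^ p)) := by gcongr
    _ = p * 2 ^ (p - 1) * (1 + ‖x‖ ^ p) * ‖y‖ := by ring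

theorem abs_norm_sub_pow_sub_norm_pow_le_add_indicator {δ : ℝ} (hδ₀ : 0 ≤ δ) (hδ₁ : δ ≤ 1)
    (x y : E) (p : ℕ) :
    |‖x - y‖ ^ p - ‖x‖ ^ p| ≤ (p + 1) * 2 ^ (p - 1) * (1 + ‖x‖ ^ p) *
      (δ + {z : E | δ ≤ ‖z‖}.indicator (fun z => 1 + ‖z‖ ^ p) y) := by
  by_cases hy : y ∈ {z : E | δ ≤ ‖z‖}
  · rw [Set.indicator_of_mem hy]
    calc |‖x - y‖ ^ p - ‖x‖ ^ p|
        ≤ 1 * 2 ^ (p - 1) * (1 + ‖x‖ ^ p) * (0 + (1 + ‖y‖ ^ p)) := by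
          simpa only [one_mul, zero_add] using abs_norm_sub_pow_sub_norm_pow_le x y p
      _ ≤ (p + 1) * 2 ^ (p - 1) * (1 + ‖x‖ ^ p) * (δ + (1 + ‖y‖ ^ p)) := by
          gcongr
          exact le_add_of_nonneg_left p.cast_nonneg
  · rw [Set.indicator_of_notMem hy, add_zero]
    have hyδ : ‖y‖ ≤ δ := (not_le.1 hy).le
    calc |‖x - y‖ ^ p - ‖x‖ ^ p|
        ≤ p * 2 ^ (p - 1) * (1 + ‖x‖ ^ p) * ‖y‖ :=
          abs_norm_sub_pow_sub_norm_pow_le_of_norm_le_one x (hyδ.trans hδ₁) p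
      _ ≤ (p + 1) * 2 ^ (p - 1) * (1 + ‖x‖ ^ p) * δ := by
          gcongr
          exact le_add_of_nonneg_right zero_le_one

end Kernel

theorem abs_integral_mul_sub_le {α : Type*} {_ : MeasurableSpace α} {μ : Measure α}
    {f g w : α → ℝ} {s : Set α} {A c δ : ℝ} (hs : MeasurableSet s)
    (hf : 0 ≤ᵐ[μ] f) (hf_one : ∫ y, f y ∂μ = 1)
    (hwf : IntegrableOn (fun y => w y * f y) s μ) (hgf : Integrable (fun y => g y * f y) μ)
    (hg : ∀ y, |g y - c| ≤ A * (δ + s.indicator w y)) :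
    |(∫ y, g y * f y ∂μ) - c| ≤ A * (δ + ∫ y in s, w y * f y ∂μ) := by
  have hf_int : Integrable f μ := .of_integral_ne_zero (by simp [hf_one])
  have hwf' : Integrable (s.indicator fun y => w y * f y) μ := hwf.integrable_indicator hs
  have hsub : (∫ y, g y * f y ∂μ) - c = ∫ y, (g y - c) * f y ∂μ := by
    simp_rw [sub_mul]
    rw [integral_sub hgf (hf_int.const_mul c), integral_const_mul, hf_one, mul_one]
  have hbound : ∀ᵐ y ∂μ,
      ‖(g y - c) * f y‖ ≤ A * (δ * f y + s.indicator (fun y => w y * f y) y) := by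
    filter_upwards [hf] with y hy
    rw [norm_mul, Real.norm_of_nonneg hy, Real.norm_eq_abs, Set.indicator_mul_left, ← add_mul,
      ← mul_assoc]
    exact mul_le_mul_of_nonneg_right (hg y) hy
  calc |(∫ y, g y * f y ∂μ) - c| = ‖∫ y, (g y - c) * f y ∂μ‖ := by rw [hsub, Real.norm_eq_abs]
    _ ≤ ∫ y, A * (δ * f y + s.indicator (fun y => w y * f y) y) ∂μ :=
        norm_integral_le_of_norm_le (((hf_int.const_mul δ).add hwf').const_mul A) hbound
    _ = A * (δ + ∫ y in s, w y * f y ∂μ) := by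
        rw [integral_const_mul, integral_add (hf_int.const_mul δ) hwf', integral_const_mul, hf_one,
          mul_one, integral_indicator hs]

section Potential

variable {E : Type*} [SeminormedAddCommGroup E] [MeasurableSpace E]

/-- The potential of the density `f` with respect to `μ` for the kernel `‖x - y‖ ^ p`; with
`p = 2m - n` and Lebesgue measure on `ℝⁿ` it is the function `ũ` of the theorem. -/
noncomputable def powPotential (μ : Measure E) (p : ℕ) (f : E → ℝ) (x : E) : ℝ :=
  ∫ y, ‖x - y‖ ^ p * f y ∂μ

/-- The mass of the density `f` outside the ball of radius `δ`, weighted by `1 + ‖y‖ ^ p`; its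
vanishing along a sequence of densities expresses concentration at the origin. -/
noncomputable def weightedTail (μ : Measure E) (p : ℕ) (f : E → ℝ) (δ : ℝ) : ℝ :=
  ∫ y in {y | δ ≤ ‖y‖}, (1 + ‖y‖ ^ p) * f y ∂μ

variable [OpensMeasurableSpace E] {μ : Measure E} {p : ℕ}

theorem integrable_norm_sub_pow_mul {f : E → ℝ} (hf_meas : AEStronglyMeasurable f μ)
    (hwf : Integrable (fun y => (1 + ‖y‖ ^ p) * f y) μ) (x : E) :
    Integrable (fun y => ‖x - y‖ ^ p * f y) μ := by
  have hkernel : AEStronglyMeasurable (fun y => ‖x - y‖ ^ p) μ :=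
    (by fun_prop : Continuous fun y => ‖x - y‖ ^ p).aestronglyMeasurable
  refine (hwf.const_mul (2 ^ (p - 1) * (1 + ‖x‖ ^ p))).mono
    (hkernel.mul hf_meas) (ae_of_all _ fun y => ?_)
  rw [← mul_assoc, norm_mul, norm_mul _ (f y)]
  gcongr
  rw [Real.norm_of_nonneg (by positivity), Real.norm_of_nonneg (by positivity)]
  exact norm_sub_pow_le_mul x y p

theorem abs_powPotential_sub_norm_pow_le {f : E → ℝ} (hf : 0 ≤ᵐ[μ] f) (hf_one : ∫ y, f y ∂μ = 1)
    (hwf : Integrable (fun y => (1 + ‖y‖ ^ p) * f y) μ) {δ : ℝ} (hδ₀ : 0 ≤ δ) (hδ₁ : δ ≤ 1)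
    (x : E) :
    |powPotential μ p f x - ‖x‖ ^ p| ≤
      (p + 1) * 2 ^ (p - 1) * (1 + ‖x‖ ^ p) * (δ + weightedTail μ p f δ) := by
  have hf_int : Integrable f μ := .of_integral_ne_zero (by simp [hf_one])
  exact abs_integral_mul_sub_le (measurableSet_le measurable_const continuous_norm.measurable) hf
    hf_one hwf.integrableOn (integrable_norm_sub_pow_mul hf_int.aestronglyMeasurable hwf x)
    fun y => abs_norm_sub_pow_sub_norm_pow_le_add_indicator hδ₀ hδ₁ x y p

variable {ι : Type*} {l : Filter ι} {F : ι → E → ℝ}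

theorem eventually_forall_abs_powPotential_sub_norm_pow_le
    (hpos : ∀ k, 0 ≤ᵐ[μ] F k) (hint : ∀ k, Integrable (fun y => (1 + ‖y‖ ^ p) * F k y) μ)
    (hone : ∀ k, ∫ y, F k y ∂μ = 1)
    (htail : ∀ δ, 0 < δ → Tendsto (fun k => weightedTail μ p (F k) δ) l (𝓝 0))
    {ε : ℝ} (hε : 0 < ε) :
    ∀ᶠ k in l, ∀ x, |powPotential μ p (F k) x - ‖x‖ ^ p| ≤ ε * (1 + ‖x‖ ^ p) := by
  set B : ℝ := (p + 1) * 2 ^ (p - 1)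
  have hB_pos : 0 < B := by positivity
  set δ : ℝ := min 1 (ε / (2 * B))
  have hδ_pos : 0 < δ := by positivity
  filter_upwards [(htail δ hδ_pos).eventually_le_const (by positivity : 0 < ε / (2 * B))]
    with k hk x
  calc |powPotential μ p (F k) x - ‖x‖ ^ p|
      ≤ B * (1 + ‖x‖ ^ p) * (δ + weightedTail μ p (F k) δ) :=
        abs_powPotential_sub_norm_pow_le (hpos k) (hone k) (hint k) hδ_pos.le (min_le_left _ _) x
    _ ≤ B * (1 + ‖x‖ ^ p) * (ε / (2 * B) + ε / (2 * B)) := by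
        gcongr
        exact min_le_right _ _
    _ = ε * (1 + ‖x‖ ^ p) := by field_simp; ring

end Potential

section RelativeError

variable {E ι : Type*} [SeminormedAddCommGroup E] {l : Filter ι} {p : ℕ} {u : ι → E → ℝ}

theorem tendstoUniformlyOn_norm_pow_of_isBounded
    (hu : ∀ ε : ℝ, 0 < ε → ∀ᶠ k in l, ∀ x, |u k x - ‖x‖ ^ p| ≤ ε * (1 + ‖x‖ ^ p))
    {s : Set E} (hs : Bornology.IsBounded s) :
    TendstoUniformlyOn u (fun x => ‖x‖ ^ p) l s := by
  obtain ⟨R, hR_pos, hR⟩ := hs.exists_pos_norm_le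
  rw [Metric.tendstoUniformlyOn_iff]
  intro ε hε
  filter_upwards [hu (ε / (2 * (1 + R ^ p))) (by positivity)] with k hk x hx
  have hxR : ‖x‖ ≤ R := hR x hx
  rw [dist_comm, Real.dist_eq]
  calc |u k x - ‖x‖ ^ p| ≤ ε / (2 * (1 + R ^ p)) * (1 + ‖x‖ ^ p) := hk x
    _ ≤ ε / (2 * (1 + R ^ p)) * (1 + R ^ p) := by gcongr
    _ = ε / 2 := by field_simp
    _ < ε := half_lt_self hε

theorem eventually_norm_pow_comparable
    (hu : ∀ ε : ℝ, 0 < ε → ∀ᶠ k in l, ∀ x, |u k x - ‖x‖ ^ p| ≤ ε * (1 + ‖x‖ ^ p))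
    {C : ℝ} (hC : 1 < C) :
    ∀ᶠ k in l, ∀ x, 1 ≤ ‖x‖ → C⁻¹ * ‖x‖ ^ p ≤ u k x ∧ u k x ≤ C * ‖x‖ ^ p := by
  have hC_inv : C⁻¹ < 1 := inv_lt_one_of_one_lt₀ hC
  have hC_sub : 1 - C⁻¹ ≤ C - 1 := by
    have : C * C⁻¹ = 1 := mul_inv_cancel₀ (by positivity)
    nlinarith
  filter_upwards [hu ((1 - C⁻¹) / 2) (by linarith)] with k hk x hx
  have hx_pow : 1 ≤ ‖x‖ ^ p := one_le_pow₀ hx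
  have herr : |u k x - ‖x‖ ^ p| ≤ (1 - C⁻¹) * ‖x‖ ^ p :=
    calc |u k x - ‖x‖ ^ p| ≤ (1 - C⁻¹) / 2 * (1 + ‖x‖ ^ p) := hk x
      _ ≤ (1 - C⁻¹) / 2 * (‖x‖ ^ p + ‖x‖ ^ p) := by gcongr
      _ = (1 - C⁻¹) * ‖x‖ ^ p := by ring
  have hupper : (1 - C⁻¹) * ‖x‖ ^ p ≤ (C - 1) * ‖x‖ ^ p := by gcongr
  obtain ⟨h_low, h_up⟩ := abs_le.1 herr
  constructor <;> linarith

end RelativeError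

theorem stmt8_general {E ι : Type*} [SeminormedAddCommGroup E] [MeasurableSpace E]
    [OpensMeasurableSpace E] {μ : Measure E} {l : Filter ι} {p : ℕ} {F : ι → E → ℝ}
    (hpos : ∀ k, 0 ≤ᵐ[μ] F k) (hint : ∀ k, Integrable (fun y => (1 + ‖y‖ ^ p) * F k y) μ)
    (hone : ∀ k, ∫ y, F k y ∂μ = 1)
    (htail : ∀ δ, 0 < δ → Tendsto (fun k => weightedTail μ p (F k) δ) l (𝓝 0)) :
    (∀ s : Set E, Bornology.IsBounded s →
      TendstoUniformlyOn (fun k => powPotential μ p (F k)) (fun x => ‖x‖ ^ p) l s) ∧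
    ∀ C : ℝ, 1 < C → ∀ᶠ k in l, ∀ x, 1 ≤ ‖x‖ →
      C⁻¹ * ‖x‖ ^ p ≤ powPotential μ p (F k) x ∧ powPotential μ p (F k) x ≤ C * ‖x‖ ^ p := by
  have herr : ∀ ε : ℝ, 0 < ε → ∀ᶠ k in l, ∀ x,
      |powPotential μ p (F k) x - ‖x‖ ^ p| ≤ ε * (1 + ‖x‖ ^ p) := fun _ =>
    eventually_forall_abs_powPotential_sub_norm_pow_le hpos hint hone htail
  exact ⟨fun _ => tendstoUniformlyOn_norm_pow_of_isBounded herr,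
    fun _ => eventually_norm_pow_comparable herr⟩

/-- If `(F_k)` are nonnegative measurable functions with total integral `1` whose
mass (weighted by `1+|y|^{2m−n}`) concentrates at the origin, then
`ũ_k(x) = ∫ |x−y|^{2m−n} F_k(y) dy` converges to `|x|^{2m−n}` uniformly on compact
sets, and eventually `C⁻¹|x|^{2m−n} ≤ ũ_k(x) ≤ C|x|^{2m−n}` for `|x| ≥ 1`. -/
theorem stmt8 (n m : ℕ) (hn : 3 ≤ n) (hodd : Odd n) (hmn : n < 2 * m)
    (F : ℕ → EuclideanSpace ℝ (Fin n) → ℝ)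
    (hmeas : ∀ k, Measurable (F k)) (hpos : ∀ k y, 0 ≤ F k y)
    (hint : ∀ k, Integrable (fun y : EuclideanSpace ℝ (Fin n) =>
      (1 + ‖y‖ ^ (2 * m - n)) * F k y))
    (hone : ∀ k, ∫ y : EuclideanSpace ℝ (Fin n), F k y = 1)
    (htail : ∀ δ : ℝ, 0 < δ →
      Tendsto (fun k => ∫ y in {y : EuclideanSpace ℝ (Fin n) | δ ≤ ‖y‖},
        (1 + ‖y‖ ^ (2 * m - n)) * F k y) atTop (𝓝 0)) :
    (∀ K : Set (EuclideanSpace ℝ (Fin n)), IsCompact K →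
      TendstoUniformlyOn (fun k x => ∫ y, ‖x - y‖ ^ (2 * m - n) * F k y)
        (fun x => ‖x‖ ^ (2 * m - n)) atTop K) ∧
    ∃ C : ℝ, 0 < C ∧ ∃ k₀ : ℕ, ∀ k, k₀ ≤ k → ∀ x : EuclideanSpace ℝ (Fin n), 1 ≤ ‖x‖ →
      C⁻¹ * ‖x‖ ^ (2 * m - n) ≤ (∫ y, ‖x - y‖ ^ (2 * m - n) * F k y) ∧
        (∫ y, ‖x - y‖ ^ (2 * m - n) * F k y) ≤ C * ‖x‖ ^ (2 * m - n) := by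
  obtain ⟨hunif, hcomp⟩ := stmt8_general (fun k => ae_of_all _ (hpos k)) hint hone htail
  exact ⟨fun K hK => hunif K hK.isBounded, 2, two_pos, eventually_atTop.1 (hcomp 2 one_lt_two)⟩
end
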